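/- Let X be a compact ℝ-tree and let μ be a diversity-maximizing probability measure on X. Then no branch point of X belongs to the support of μ: if z ∈ X is such that X \ {z} has at least three connected components, then z ∉ supp μ. -/

import Mathlib

open MeasureTheory Real

/-- `S` is a geodesic segment from `x` to `y`: the image of an isometric embedding
`γ : [0, d(x,y)] → X` with `γ 0 = x` and `γ (d(x,y)) = y`. -/
def IsGeodesicSegment {X : Type*} [MetricSpace X] (x y : X) (S : Set X) : Prop :=
  ∃ γ : ℝ → X, γ 0 = x ∧ γ (dist x y) = y ∧
    (∀ s ∈ Set.Icc (0 : ℝ) (dist x y), ∀ t ∈ Set.Icc (0 : ℝ) (dist x y),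
      dist (γ s) (γ t) = |s - t|) ∧
    S = γ '' Set.Icc (0 : ℝ) (dist x y)

/-- The similarity form ⟨μ,ν⟩_W = ∬ e^{-d(x,y)} dμ(x) dν(y) for (nonnegative) Borel
measures. -/
noncomputable def simFormP {X : Type*} [MetricSpace X] [MeasurableSpace X]
    (μ ν : Measure X) : ℝ :=
  ∫ x, ∫ y, Real.exp (-dist x y) ∂ν ∂μ

/-- The support of a Borel measure: points all of whose open neighbourhoods have
positive measure. -/
def measSupport {X : Type*} [TopologicalSpace X] [MeasurableSpace X]
    (μ : Measure X) : Set X :=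
  {x | ∀ U : Set X, IsOpen U → x ∈ U → 0 < μ U}

/-!
Let `μ` be diversity-maximizing with energy `L = ⟨μ,μ⟩_W > 0` and potential
`U x = ∫ e^{-d(x,y)} dμ(y)`. Perturbing `μ` towards point masses gives `L ≤ U` everywhere, and
integrating `U` against `μ` then gives `U = L` on the support. Suppose `p₁, …, pₙ` lie in distinct
branches at `z`, each at distance `t` from `z`. A point `y` shares its branch with at most one `pᵢ`,
and it is reached through `z` from all the others, so
`∑ᵢ e^{-d(pᵢ,y)} ≤ (e^t + (n - 1) e^{-t}) e^{-d(z,y)}`. Integrating in `y`, a point `z` of the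
support must satisfy `n L ≤ (e^t + (n - 1) e^{-t}) L`. For `n = 3` and `0 < t < log 2` this fails.
-/

theorem eq_of_ae_eq_of_mem_measSupport {X Y : Type*} [TopologicalSpace X] [MeasurableSpace X]
    [TopologicalSpace Y] [T2Space Y] {μ : Measure X} {f g : X → Y} (hf : Continuous f)
    (hg : Continuous g) (hfg : f =ᵐ[μ] g) {z : X} (hz : z ∈ measSupport μ) : f z = g z := by
  by_contra hne
  exact (hz {x | f x ≠ g x} (isOpen_ne_fun hf hg) hne).ne' hfg

section Potential

open scoped NNReal

/-- The potential `x ↦ ∫ e^{-d(x,y)} dμ(y)` of a measure, through which the similarity form is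
studied: `⟨ν,μ⟩_W` is the `ν`-integral of the potential of `μ`. -/
noncomputable def simPotential {X : Type*} [PseudoMetricSpace X] [MeasurableSpace X]
    (μ : Measure X) (x : X) : ℝ :=
  ∫ y, exp (-dist x y) ∂μ

variable {X : Type*} [PseudoMetricSpace X]

theorem norm_exp_neg_dist_le_one (x y : X) : ‖exp (-dist x y)‖ ≤ 1 := by
  rw [norm_of_nonneg (exp_nonneg _), exp_le_one_iff, neg_nonpos]
  exact dist_nonneg

variable [MeasurableSpace X]

theorem simPotential_nnreal_smul_measure (c : ℝ≥0) (μ : Measure X) (x : X) :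
    simPotential (c • μ) x = c * simPotential μ x :=
  integral_smul_nnreal_measure _ c

variable [OpensMeasurableSpace X]

theorem integrable_exp_neg_dist (μ : Measure X) [IsFiniteMeasure μ] (x : X) :
    Integrable (fun y ↦ exp (-dist x y)) μ :=
  .of_bound (Continuous.aestronglyMeasurable (by fun_prop)) 1
    (.of_forall (norm_exp_neg_dist_le_one x))

theorem simPotential_pos (μ : Measure X) [IsFiniteMeasure μ] [NeZero μ] (x : X) :
    0 < simPotential μ x :=
  integral_exp_pos (integrable_exp_neg_dist μ x)

theorem continuous_simPotential (μ : Measure X) [IsFiniteMeasure μ] :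
    Continuous (simPotential μ) :=
  continuous_of_dominated (fun x ↦ (integrable_exp_neg_dist μ x).aestronglyMeasurable)
    (fun x ↦ .of_forall (norm_exp_neg_dist_le_one x)) (integrable_const 1)
    (.of_forall fun y ↦ by fun_prop)

theorem integrable_simPotential (μ ν : Measure X) [IsFiniteMeasure μ] [IsFiniteMeasure ν] :
    Integrable (simPotential μ) ν :=
  .of_bound (continuous_simPotential μ).aestronglyMeasurable (1 * μ.real Set.univ)
    (.of_forall fun x ↦ norm_integral_le_of_norm_le_const
      (.of_forall (norm_exp_neg_dist_le_one x)))

theorem simPotential_add_measure (μ ν : Measure X) [IsFiniteMeasure μ] [IsFiniteMeasure ν] (x : X) :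
    simPotential (μ + ν) x = simPotential μ x + simPotential ν x :=
  integral_add_measure (integrable_exp_neg_dist μ x) (integrable_exp_neg_dist ν x)

end Potential

section SimilarityForm

open scoped NNReal

variable {X : Type*} [MetricSpace X] [MeasurableSpace X]

theorem simFormP_eq_integral_simPotential (μ ν : Measure X) :
    simFormP μ ν = ∫ x, simPotential ν x ∂μ :=
  rfl

theorem simFormP_nnreal_smul_left (c : ℝ≥0) (μ ν : Measure X) :
    simFormP (c • μ) ν = c * simFormP μ ν :=
  integral_smul_nnreal_measure _ c

theorem simFormP_nnreal_smul_right (c : ℝ≥0) (μ ν : Measure X) :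
    simFormP μ (c • ν) = c * simFormP μ ν := by
  simp only [simFormP_eq_integral_simPotential, simPotential_nnreal_smul_measure,
    integral_const_mul]

variable [OpensMeasurableSpace X]

theorem simFormP_add_left (μ₁ μ₂ ν : Measure X) [IsFiniteMeasure μ₁] [IsFiniteMeasure μ₂]
    [IsFiniteMeasure ν] : simFormP (μ₁ + μ₂) ν = simFormP μ₁ ν + simFormP μ₂ ν :=
  integral_add_measure (integrable_simPotential ν μ₁) (integrable_simPotential ν μ₂)

theorem simFormP_add_right (μ ν₁ ν₂ : Measure X) [IsFiniteMeasure μ] [IsFiniteMeasure ν₁]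
    [IsFiniteMeasure ν₂] : simFormP μ (ν₁ + ν₂) = simFormP μ ν₁ + simFormP μ ν₂ := by
  simp only [simFormP_eq_integral_simPotential, simPotential_add_measure]
  exact integral_add (integrable_simPotential ν₁ μ) (integrable_simPotential ν₂ μ)

theorem simFormP_dirac_left (p : X) (ν : Measure X) :
    simFormP (Measure.dirac p) ν = simPotential ν p :=
  integral_dirac _ p

theorem simFormP_dirac_right (μ : Measure X) (p : X) :
    simFormP μ (Measure.dirac p) = simPotential μ p := by
  simp only [simFormP, simPotential, integral_dirac, dist_comm p]

theorem simFormP_smul_add_smul_self (a b : ℝ≥0) (μ ν : Measure X) [IsFiniteMeasure μ]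
    [IsFiniteMeasure ν] :
    simFormP (a • μ + b • ν) (a • μ + b • ν) =
      a ^ 2 * simFormP μ μ + a * b * (simFormP μ ν + simFormP ν μ) + b ^ 2 * simFormP ν ν := by
  simp only [simFormP_add_left, simFormP_add_right, simFormP_nnreal_smul_left,
    simFormP_nnreal_smul_right]
  ring

end SimilarityForm

section DiversityMaximizing

open scoped unitInterval

/-- A diversity-maximizing measure: a probability measure minimizing the energy `⟨ν,ν⟩_W` among
all probability measures `ν`. -/
structure IsDiversityMaximizing {X : Type*} [MetricSpace X] [MeasurableSpace X]
    (μ : Measure X) : Prop where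
  isProbabilityMeasure : IsProbabilityMeasure μ
  simFormP_self_le : ∀ ν : Measure X, IsProbabilityMeasure ν → simFormP μ μ ≤ simFormP ν ν

theorem nonneg_of_forall_Ioo_nonneg_add_mul {a b : ℝ}
    (h : ∀ s ∈ Set.Ioo (0 : ℝ) 1, 0 ≤ a + s * b) : 0 ≤ a := by
  have hlim : Filter.Tendsto (fun s : ℝ ↦ a + s * b) (nhdsWithin 0 (Set.Ioi 0)) (nhds a) := by
    simpa using (Continuous.tendsto (by fun_prop : Continuous fun s : ℝ ↦ a + s * b) 0).mono_left
      nhdsWithin_le_nhds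
  exact ge_of_tendsto hlim (Filter.mem_of_superset (Ioo_mem_nhdsGT one_pos) h)

namespace IsDiversityMaximizing

variable {X : Type*} [MetricSpace X] [MeasurableSpace X] [OpensMeasurableSpace X] {μ : Measure X}

/- The right-hand side is not written as `2 * simFormP μ ν` because symmetry of the form would need
Fubini, hence second countability of `X`. -/
theorem two_mul_simFormP_self_le (hμ : IsDiversityMaximizing μ) (ν : Measure X)
    [IsProbabilityMeasure ν] : 2 * simFormP μ μ ≤ simFormP μ ν + simFormP ν μ := by
  have := hμ.isProbabilityMeasure
  rw [← sub_nonneg]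
  refine nonneg_of_forall_Ioo_nonneg_add_mul
    (b := simFormP μ μ + simFormP ν ν - (simFormP μ ν + simFormP ν μ)) fun s hs ↦ ?_
  let p : I := ⟨s, hs.1.le, hs.2.le⟩
  have henergy := hμ.simFormP_self_le (unitInterval.toNNReal p • ν +
    unitInterval.toNNReal (σ p) • μ) inferInstance
  rw [simFormP_smul_add_smul_self] at henergy
  simp only [unitInterval.coe_toNNReal, unitInterval.coe_symm_eq, p] at henergy
  refine nonneg_of_mul_nonneg_right ?_ hs.1
  linarith

theorem simFormP_self_le_simPotential (hμ : IsDiversityMaximizing μ) (p : X) :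
    simFormP μ μ ≤ simPotential μ p := by
  have hvar := hμ.two_mul_simFormP_self_le (Measure.dirac p)
  rw [simFormP_dirac_left, simFormP_dirac_right] at hvar
  linarith

theorem simPotential_eq_of_mem_measSupport (hμ : IsDiversityMaximizing μ) {z : X}
    (hz : z ∈ measSupport μ) : simPotential μ z = simFormP μ μ := by
  have := hμ.isProbabilityMeasure
  have hae : (fun _ ↦ simFormP μ μ) =ᵐ[μ] simPotential μ := by
    rw [← integral_eq_iff_of_ae_le (integrable_const _) (integrable_simPotential μ μ)
      (.of_forall hμ.simFormP_self_le_simPotential), integral_const, probReal_univ, one_smul,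
      simFormP_eq_integral_simPotential]
  exact (eq_of_ae_eq_of_mem_measSupport continuous_const (continuous_simPotential μ) hae hz).symm

end IsDiversityMaximizing

end DiversityMaximizing

namespace IsGeodesicSegment

variable {X : Type*} [MetricSpace X] {x y w : X} {S : Set X}

theorem left_mem (h : IsGeodesicSegment x y S) : x ∈ S := by
  obtain ⟨γ, h0, -, -, rfl⟩ := h
  exact ⟨0, ⟨le_rfl, dist_nonneg⟩, h0⟩

theorem right_mem (h : IsGeodesicSegment x y S) : y ∈ S := by
  obtain ⟨γ, -, h1, -, rfl⟩ := h
  exact ⟨dist x y, ⟨dist_nonneg, le_rfl⟩, h1⟩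

theorem isPreconnected (h : IsGeodesicSegment x y S) : IsPreconnected S := by
  obtain ⟨γ, -, -, hγ, rfl⟩ := h
  have hlip : LipschitzOnWith 1 γ (Set.Icc 0 (dist x y)) :=
    .of_dist_le_mul fun s hs t ht ↦ by rw [hγ s hs t ht, dist_eq, NNReal.coe_one, one_mul]
  exact isPreconnected_Icc.image γ hlip.continuousOn

theorem exists_dist_eq (h : IsGeodesicSegment x y S) {t : ℝ} (ht : t ∈ Set.Icc 0 (dist x y)) :
    ∃ p ∈ S, dist x p = t := by
  obtain ⟨γ, h0, -, hγ, rfl⟩ := h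
  refine ⟨γ t, ⟨t, ht, rfl⟩, ?_⟩
  rw [← h0, hγ 0 ⟨le_rfl, dist_nonneg⟩ t ht, zero_sub, abs_neg, abs_of_nonneg ht.1]

theorem dist_add_dist (h : IsGeodesicSegment x y S) (hw : w ∈ S) :
    dist x w + dist w y = dist x y := by
  obtain ⟨γ, h0, h1, hγ, rfl⟩ := h
  obtain ⟨s, hs, rfl⟩ := hw
  have hx := hγ 0 ⟨le_rfl, dist_nonneg⟩ s hs
  have hy := hγ s hs _ ⟨dist_nonneg, le_rfl⟩
  rw [h0, zero_sub, abs_neg, abs_of_nonneg hs.1] at hx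
  rw [h1, abs_of_nonpos (sub_nonpos.2 hs.2)] at hy
  linarith

end IsGeodesicSegment

section Branch

/-- The branch at `z` containing `x`: the connected component of `x` in the complement of `z`
(with the junk value `∅` when `x = z`). -/
def branch {X : Type*} [TopologicalSpace X] (z x : X) : Set X :=
  connectedComponentIn {z}ᶜ x

/-- A branch point: its complement has at least three connected components. -/
def IsBranchPoint {X : Type*} [TopologicalSpace X] (z : X) : Prop :=
  ∃ x₁ x₂ x₃ : X, x₁ ∈ ({z}ᶜ : Set X) ∧ x₂ ∈ ({z}ᶜ : Set X) ∧ x₃ ∈ ({z}ᶜ : Set X) ∧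
    branch z x₁ ≠ branch z x₂ ∧ branch z x₁ ≠ branch z x₃ ∧ branch z x₂ ≠ branch z x₃

theorem IsBranchPoint.exists_injective_branch {X : Type*} [TopologicalSpace X] {z : X}
    (hz : IsBranchPoint z) :
    ∃ x : Fin 3 → X, (∀ i, x i ≠ z) ∧ Function.Injective fun i ↦ branch z (x i) := by
  obtain ⟨x₁, x₂, x₃, h₁, h₂, h₃, h₁₂, h₁₃, h₂₃⟩ := hz
  refine ⟨![x₁, x₂, x₃], ?_, fun i j hij ↦ ?_⟩
  · simpa [Fin.forall_fin_succ] using ⟨h₁, h₂, h₃⟩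
  · fin_cases i <;> fin_cases j <;> simp_all

/-- A geodesic space: any two points are joined by a geodesic segment. The segment need not
be unique. -/
def IsGeodesicSpace (X : Type*) [MetricSpace X] : Prop :=
  ∀ x y : X, ∃ S, IsGeodesicSegment x y S

namespace IsGeodesicSpace

variable {X : Type*} [MetricSpace X] {z : X}

theorem dist_add_dist_of_branch_ne (hX : IsGeodesicSpace X) {x y : X}
    (hxy : branch z x ≠ branch z y) : dist x z + dist z y = dist x y := by
  obtain ⟨S, hS⟩ := hX x y
  refine hS.dist_add_dist (by_contra fun hzS ↦ hxy (connectedComponentIn_eq ?_))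
  exact hS.isPreconnected.subset_connectedComponentIn hS.left_mem
    (Set.subset_compl_singleton_iff.2 hzS) hS.right_mem

theorem exists_dist_eq_branch_eq (hX : IsGeodesicSpace X) {x : X} {t : ℝ}
    (ht : t ∈ Set.Ioc 0 (dist z x)) : ∃ p, dist z p = t ∧ branch z p = branch z x := by
  obtain ⟨S, hS⟩ := hX z x
  obtain ⟨p, hpS, hpt⟩ := hS.exists_dist_eq (Set.Ioc_subset_Icc_self ht)
  refine ⟨p, hpt, by_contra fun hne ↦ ?_⟩
  have hzpx := hS.dist_add_dist hpS
  have hpzx := hX.dist_add_dist_of_branch_ne hne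
  rw [dist_comm p z] at hpzx
  linarith [ht.1]

theorem eventually_exists_dist_eq_injective_branch (hX : IsGeodesicSpace X) {ι : Type*} [Finite ι]
    {x : ι → X} (hxz : ∀ i, x i ≠ z) (hx : Function.Injective fun i ↦ branch z (x i)) :
    ∀ᶠ t in nhdsWithin (0 : ℝ) (Set.Ioi 0), ∃ p : ι → X,
      (∀ i, dist z (p i) = t) ∧ Function.Injective fun i ↦ branch z (p i) := by
  have hsmall : ∀ᶠ t in nhdsWithin (0 : ℝ) (Set.Ioi 0), ∀ i, t ∈ Set.Ioc 0 (dist z (x i)) :=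
    Filter.eventually_all.2 fun i ↦ Ioc_mem_nhdsGT (dist_pos.2 (hxz i).symm)
  filter_upwards [hsmall] with t ht
  choose p hpt hpx using fun i ↦ hX.exists_dist_eq_branch_eq (ht i)
  exact ⟨p, hpt, by simpa only [hpx] using hx⟩

end IsGeodesicSpace

end Branch

section BranchEstimate

theorem exp_neg_dist_le_exp_mul {X : Type*} [PseudoMetricSpace X] (p z y : X) :
    exp (-dist p y) ≤ exp (dist z p) * exp (-dist z y) := by
  rw [← exp_add, exp_le_exp]
  linarith [dist_triangle z p y]

theorem exp_add_mul_exp_neg_lt {t m : ℝ} (ht : 0 < t) (htm : exp t < m) :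
    exp t + m * exp (-t) < m + 1 := by
  have hinv : exp t * exp (-t) = 1 := by rw [← exp_add, add_neg_cancel, exp_zero]
  have hpos : 0 < (m - exp t) * (1 - exp (-t)) :=
    mul_pos (sub_pos.2 htm) (sub_pos.2 (exp_lt_one_iff.2 (neg_lt_zero.2 ht)))
  linarith

variable {X : Type*} [MetricSpace X] {z : X} {ι : Type*} [Fintype ι] {p : ι → X} {t : ℝ}

theorem IsGeodesicSpace.exp_neg_dist_of_branch_ne (hX : IsGeodesicSpace X) {x y : X}
    (hxy : branch z x ≠ branch z y) :
    exp (-dist x y) = exp (-dist z x) * exp (-dist z y) := by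
  rw [← exp_add, ← neg_add, ← hX.dist_add_dist_of_branch_ne hxy, dist_comm x z]

theorem IsGeodesicSpace.sum_exp_neg_dist_le (hX : IsGeodesicSpace X) (ht : 0 ≤ t)
    (hpt : ∀ i, dist z (p i) = t) (hp : Function.Injective fun i ↦ branch z (p i)) (y : X) :
    ∑ i, exp (-dist (p i) y) ≤
      (exp t + (Fintype.card ι - 1) * exp (-t)) * exp (-dist z y) := by
  -- The terms of the sum exceed `e^{-t} e^{-d(z,y)}` only in the branch of `y`.
  set excess : ι → ℝ := fun i ↦ exp (-dist (p i) y) - exp (-t) * exp (-dist z y) with hexcess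
  have hzero (i : ι) (hi : branch z (p i) ≠ branch z y) : excess i = 0 := by
    rw [hexcess, sub_eq_zero, hX.exp_neg_dist_of_branch_ne hi, hpt]
  have hle (i : ι) : excess i ≤ (exp t - exp (-t)) * exp (-dist z y) := by
    have hnear := exp_neg_dist_le_exp_mul (p i) z y
    rw [hpt] at hnear
    linarith
  have hsum : ∑ i, excess i ≤ (exp t - exp (-t)) * exp (-dist z y) := by
    by_cases hy : ∃ i, branch z (p i) = branch z y
    · obtain ⟨i, hi⟩ := hy
      rw [Fintype.sum_eq_single i fun j hj ↦ hzero j fun hjy ↦ hj (hp (hjy.trans hi.symm))]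
      exact hle i
    · rw [Finset.sum_eq_zero fun i _ ↦ hzero i fun hi ↦ hy ⟨i, hi⟩]
      have hmono : exp (-t) ≤ exp t := exp_le_exp.2 (by linarith)
      exact mul_nonneg (sub_nonneg.2 hmono) (exp_nonneg _)
  rw [Finset.sum_sub_distrib, Finset.sum_const, Finset.card_univ, nsmul_eq_mul] at hsum
  linarith

variable [MeasurableSpace X] [OpensMeasurableSpace X]

theorem IsGeodesicSpace.sum_simPotential_le (hX : IsGeodesicSpace X) (ht : 0 ≤ t)
    (hpt : ∀ i, dist z (p i) = t) (hp : Function.Injective fun i ↦ branch z (p i))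
    (μ : Measure X) [IsFiniteMeasure μ] :
    ∑ i, simPotential μ (p i) ≤
      (exp t + (Fintype.card ι - 1) * exp (-t)) * simPotential μ z := by
  unfold simPotential
  rw [← integral_finsetSum _ fun i _ ↦ integrable_exp_neg_dist μ (p i), ← integral_const_mul]
  exact integral_mono (integrable_finsetSum _ fun i _ ↦ integrable_exp_neg_dist μ (p i))
    ((integrable_exp_neg_dist μ z).const_mul _) (hX.sum_exp_neg_dist_le ht hpt hp)

theorem IsDiversityMaximizing.card_le_of_mem_measSupport {μ : Measure X}
    (hμ : IsDiversityMaximizing μ) (hX : IsGeodesicSpace X) (hz : z ∈ measSupport μ)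
    (ht : 0 ≤ t) (hpt : ∀ i, dist z (p i) = t)
    (hp : Function.Injective fun i ↦ branch z (p i)) :
    (Fintype.card ι : ℝ) ≤ exp t + (Fintype.card ι - 1) * exp (-t) := by
  have := hμ.isProbabilityMeasure
  refine le_of_mul_le_mul_right ?_ (simPotential_pos μ z)
  calc (Fintype.card ι : ℝ) * simPotential μ z
      = ∑ _i : ι, simFormP μ μ := by
        rw [hμ.simPotential_eq_of_mem_measSupport hz, Finset.sum_const, Finset.card_univ,
          nsmul_eq_mul]
    _ ≤ ∑ i, simPotential μ (p i) :=
        Finset.sum_le_sum fun i _ ↦ hμ.simFormP_self_le_simPotential (p i)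
    _ ≤ (exp t + (Fintype.card ι - 1) * exp (-t)) * simPotential μ z :=
        hX.sum_simPotential_le ht hpt hp μ

end BranchEstimate

theorem stmt19_general {X : Type*} [MetricSpace X] [MeasurableSpace X] [OpensMeasurableSpace X]
    (hX : IsGeodesicSpace X) {μ : Measure X} (hμ : IsDiversityMaximizing μ) {z : X}
    (hz : IsBranchPoint z) : z ∉ measSupport μ := by
  intro hsupp
  obtain ⟨x, hxz, hx⟩ := hz.exists_injective_branch
  obtain ⟨t, ⟨p, hpt, hp⟩, ht, htlog⟩ :=
    ((hX.eventually_exists_dist_eq_injective_branch hxz hx).and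
      (Ioo_mem_nhdsGT (log_pos one_lt_two))).exists
  have hcard := hμ.card_le_of_mem_measSupport hX hsupp ht.le hpt hp
  have hlt := exp_add_mul_exp_neg_lt ht ((lt_log_iff_exp_lt two_pos).1 htlog)
  rw [Fintype.card_fin, Nat.cast_ofNat] at hcard
  linarith

theorem stmt19 {X : Type*} [MetricSpace X] [CompactSpace X]
    [MeasurableSpace X] [BorelSpace X]
    (seg : X → X → Set X)
    (hseg : ∀ x y : X, IsGeodesicSegment x y (seg x y))
    (huniq : ∀ (x y : X) (S : Set X), IsGeodesicSegment x y S → S = seg x y)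
    (htree : ∀ x y z : X, seg x z ⊆ seg x y ∪ seg y z)
    (μ : Measure X) (hμ : IsProbabilityMeasure μ)
    (hmax : ∀ ν : Measure X, IsProbabilityMeasure ν → simFormP μ μ ≤ simFormP ν ν)
    (z : X)
    (hbranch : ∃ x₁ x₂ x₃ : X, x₁ ∈ ({z}ᶜ : Set X) ∧ x₂ ∈ ({z}ᶜ : Set X) ∧
      x₃ ∈ ({z}ᶜ : Set X) ∧
      connectedComponentIn ({z}ᶜ : Set X) x₁ ≠ connectedComponentIn ({z}ᶜ : Set X) x₂ ∧
      connectedComponentIn ({z}ᶜ : Set X) x₁ ≠ connectedComponentIn ({z}ᶜ : Set X) x₃ ∧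
      connectedComponentIn ({z}ᶜ : Set X) x₂ ≠ connectedComponentIn ({z}ᶜ : Set X) x₃) :
    z ∉ measSupport μ :=
  stmt19_general (fun x y ↦ ⟨seg x y, hseg x y⟩) ⟨hμ, hmax⟩ hbranch
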